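/- arXiv:1608.04697 — 6 statements merged into one kernel-verified Lean document; each statement's English description precedes it below -/
import Mathlib

section
/- Let X be a real-valued random variable with cumulative distribution function F satisfying lim_{x→∞} (1 − F(δx))/(1 − F(x)) = 0 for every δ > 1. Let μ₁, μ₂ ∈ ℝ and 0 < σ₁ < σ₂. Then the ratio of upper tails P(σ₁X + μ₁ ≥ n)/P(σ₂X + μ₂ ≥ n) tends to 0 as n → ∞ (along integers n, whenever the denominator is eventually positive). Consequently the sequences r^i_n := P(σᵢX + μᵢ ≥ n), i = 1, 2, cannot coincide for all n, so the laws of h(σ₁X+μ₁) and h(σ₂X+μ₂) differ. -/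
/-!
Write `G x = P(X ≥ x) = 1 - F x`. The two tails are `G aₙ` and `G bₙ` with
`aₙ = (n - μ₁) / σ₁` and `bₙ = (n - μ₂) / σ₂`. For any `δ` with `1 < δ < σ₂ / σ₁`, the difference
`aₙ - δ bₙ` is affine in `n` with positive slope `1 / σ₁ - δ / σ₂`, so eventually `δ bₙ ≤ aₙ` and,
`G` being antitone, `G aₙ / G bₙ ≤ G (δ bₙ) / G bₙ → 0`.

If the two tail sequences coincided, this ratio would eventually be `1`. Finally, for an integer `n`
the event `n ≤ Y` equals `n ≤ ⌊Y⌋`, so the law of `⌊Y⌋` determines the tails at integers.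
-/

open MeasureTheory ProbabilityTheory Filter

/-- The upper tail of `σ X + μ` at `t` is the complementary cdf of `X` at `(t - μ) / σ`. -/
lemma tail_affine_eq {Ω : Type*} [MeasureSpace Ω] [IsProbabilityMeasure (ℙ : Measure Ω)]
    {X : Ω → ℝ} (hX : Measurable X) {F : ℝ → ℝ} (hF : ∀ x, F x = (ℙ {ω | X ω < x}).toReal)
    {σ : ℝ} (hσ : 0 < σ) (μ t : ℝ) :
    (ℙ {ω | t ≤ σ * X ω + μ}).toReal = 1 - F ((t - μ) / σ) := by
  have hset : {ω | t ≤ σ * X ω + μ} = {ω | X ω < (t - μ) / σ}ᶜ := by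
    ext ω
    simp only [Set.mem_ofPred_eq, Set.mem_compl_iff, not_lt, div_le_iff₀ hσ]
    constructor <;> intro h <;> linarith
  rw [hset, hF]
  exact probReal_compl_eq_one_sub (hX measurableSet_Iio)

/-- An integer tail of `Y` depends only on the point masses of `⌊Y⌋`. -/
lemma tail_eq_of_floor_eq {Ω : Type*} [MeasureSpace Ω] {Y Z : Ω → ℝ}
    (hY : Measurable Y) (hZ : Measurable Z)
    (h : ∀ k : ℤ, ℙ {ω | ⌊Y ω⌋ = k} = ℙ {ω | ⌊Z ω⌋ = k}) (n : ℕ) :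
    ℙ {ω | (n : ℝ) ≤ Y ω} = ℙ {ω | (n : ℝ) ≤ Z ω} := by
  have hmap : (ℙ : Measure Ω).map (fun ω => ⌊Y ω⌋) = (ℙ : Measure Ω).map (fun ω => ⌊Z ω⌋) := by
    refine Measure.ext_of_singleton fun k => ?_
    rw [Measure.map_apply hY.floor (measurableSet_singleton k),
      Measure.map_apply hZ.floor (measurableSet_singleton k)]
    exact h k
  have hset : ∀ W : Ω → ℝ, {ω | (n : ℝ) ≤ W ω} = (fun ω => ⌊W ω⌋) ⁻¹' Set.Ici (n : ℤ) := by
    intro W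
    ext ω
    simp [Int.le_floor]
  rw [hset, hset, ← Measure.map_apply hY.floor measurableSet_Ici,
    ← Measure.map_apply hZ.floor measurableSet_Ici, hmap]

/-- **Tail ratio comparison for different scales.**
If the cdf `F` of `X` satisfies the right-tail condition
`(1 - F(δx))/(1 - F x) → 0` as `x → ∞` for every `δ > 1`, and `0 < σ₁ < σ₂`,
then (provided the denominators are eventually positive) the ratio of the upper tails
`P(σ₁ X + μ₁ ≥ n) / P(σ₂ X + μ₂ ≥ n)` tends to `0` along integers `n → ∞`;
consequently the two tail sequences differ, so the laws of the floor-quantized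
variables differ. -/
theorem quantized_tail_ratio_tendsto_zero
    {Ω : Type*} [MeasureSpace Ω] [IsProbabilityMeasure (ℙ : Measure Ω)]
    (X : Ω → ℝ) (hX : Measurable X)
    (F : ℝ → ℝ) (hF : ∀ x, F x = (ℙ {ω | X ω < x}).toReal)
    (htail : ∀ δ : ℝ, 1 < δ →
      Tendsto (fun x => (1 - F (δ * x)) / (1 - F x)) atTop (nhds 0))
    (μ₁ μ₂ : ℝ) (σ₁ σ₂ : ℝ) (hσ₁ : 0 < σ₁) (hσ₁₂ : σ₁ < σ₂)
    (hden : ∀ᶠ n : ℕ in atTop, 0 < ℙ {ω | (n : ℝ) ≤ σ₂ * X ω + μ₂}) :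
    Tendsto (fun n : ℕ =>
        (ℙ {ω | (n : ℝ) ≤ σ₁ * X ω + μ₁}).toReal /
        (ℙ {ω | (n : ℝ) ≤ σ₂ * X ω + μ₂}).toReal) atTop (nhds 0) ∧
    (∃ n : ℕ, ℙ {ω | (n : ℝ) ≤ σ₁ * X ω + μ₁} ≠ ℙ {ω | (n : ℝ) ≤ σ₂ * X ω + μ₂}) ∧
    (∃ k : ℤ, ℙ {ω | ⌊σ₁ * X ω + μ₁⌋ = k} ≠ ℙ {ω | ⌊σ₂ * X ω + μ₂⌋ = k}) := by
  have hσ₂ : 0 < σ₂ := hσ₁.trans hσ₁₂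
  have hratio : Tendsto (fun n : ℕ =>
      (ℙ {ω | (n : ℝ) ≤ σ₁ * X ω + μ₁}).toReal /
      (ℙ {ω | (n : ℝ) ≤ σ₂ * X ω + μ₂}).toReal) atTop (nhds 0) := by
    obtain ⟨δ, hδ, hδσ⟩ : ∃ δ : ℝ, 1 < δ ∧ δ < σ₂ / σ₁ := exists_between ((one_lt_div hσ₁).2 hσ₁₂)
    have hb : Tendsto (fun n : ℕ => ((n : ℝ) - μ₂) / σ₂) atTop atTop :=
      (tendsto_atTop_add_const_right _ (-μ₂) tendsto_natCast_atTop_atTop).atTop_div_const hσ₂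
    have hslope : 0 < 1 / σ₁ - δ / σ₂ := by
      rw [sub_pos, div_lt_div_iff₀ hσ₂ hσ₁]
      rw [lt_div_iff₀ hσ₁] at hδσ
      linarith
    have hle : ∀ᶠ n : ℕ in atTop, δ * (((n : ℝ) - μ₂) / σ₂) ≤ ((n : ℝ) - μ₁) / σ₁ := by
      have hlin : Tendsto (fun n : ℕ => (n : ℝ) * (1 / σ₁ - δ / σ₂)) atTop atTop :=
        tendsto_natCast_atTop_atTop.atTop_mul_const hslope
      filter_upwards [hlin.eventually_ge_atTop (μ₁ / σ₁ - δ * μ₂ / σ₂)] with n hn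
      have e : ((n : ℝ) - μ₁) / σ₁ - δ * (((n : ℝ) - μ₂) / σ₂)
          = (n : ℝ) * (1 / σ₁ - δ / σ₂) - (μ₁ / σ₁ - δ * μ₂ / σ₂) := by ring
      linarith
    have hmono : Monotone F := by
      intro x y hxy
      rw [hF, hF]
      exact measureReal_mono fun ω (hω : X ω < x) => hω.trans_le hxy
    refine tendsto_of_tendsto_of_tendsto_of_le_of_le' tendsto_const_nhds ((htail δ hδ).comp hb)
      (Eventually.of_forall fun n => by positivity) ?_
    filter_upwards [hle] with n hn
    have hnonneg : 0 ≤ 1 - F (((n : ℝ) - μ₂) / σ₂) := by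
      rw [← tail_affine_eq hX hF hσ₂]
      exact ENNReal.toReal_nonneg
    rw [tail_affine_eq hX hF hσ₁, tail_affine_eq hX hF hσ₂]
    exact div_le_div_of_nonneg_right (sub_le_sub_left (hmono hn) 1) hnonneg
  have hne : ∃ n : ℕ,
      ℙ {ω | (n : ℝ) ≤ σ₁ * X ω + μ₁} ≠ ℙ {ω | (n : ℝ) ≤ σ₂ * X ω + μ₂} := by
    by_contra! hcon
    refine one_ne_zero (tendsto_nhds_unique (tendsto_const_nhds.congr' ?_) hratio)
    filter_upwards [hden] with n hn
    rw [hcon n, div_self (ENNReal.toReal_pos hn.ne' (measure_ne_top _ _)).ne']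
  refine ⟨hratio, hne, ?_⟩
  by_contra! hcon
  obtain ⟨n, hn⟩ := hne
  exact hn (tail_eq_of_floor_eq ((hX.const_mul σ₁).add_const μ₁)
    ((hX.const_mul σ₂).add_const μ₂) hcon n)
end

section
/- Let X be a real-valued random variable whose cumulative distribution function F(x) = P(X < x) is continuous and strictly increasing on ℝ. Let μ₁, μ₂ ∈ ℝ. If the random variables h(X + μ₁) and h(X + μ₂) have the same law, where h is the integer-part function, then μ₁ = μ₂. -/
/-! The laws of `⌊X + μ₁⌋` and `⌊X + μ₂⌋` agree on singletons, hence on every subset of the countable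
space `ℤ`, in particular on the negative integers. Since `⌊X + μ⌋ < 0` exactly when `X < -μ`, this
says `F (-μ₁) = F (-μ₂)`, and a strictly increasing `F` is injective. -/

open MeasureTheory ProbabilityTheory Filter

/-- **Identification of the shift parameter from floor-quantized observations.**
If `X` has a continuous and strictly increasing cdf `F x = P(X < x)`, and the
integer parts of `X + μ₁` and `X + μ₂` have the same law, then `μ₁ = μ₂`. -/
theorem quantized_shift_identification
    {Ω : Type*} [MeasureSpace Ω] [IsProbabilityMeasure (ℙ : Measure Ω)]
    (X : Ω → ℝ) (hX : Measurable X)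
    (F : ℝ → ℝ) (hF : ∀ x, F x = (ℙ {ω | X ω < x}).toReal)
    (hFcont : Continuous F) (hFmono : StrictMono F)
    (μ₁ μ₂ : ℝ)
    (hlaw : ∀ k : ℤ, ℙ {ω | ⌊X ω + μ₁⌋ = k} = ℙ {ω | ⌊X ω + μ₂⌋ = k}) :
    μ₁ = μ₂ := by
  have hmeas (μ : ℝ) : Measurable fun ω => ⌊X ω + μ⌋ := (hX.add_const μ).floor
  have hmap : (ℙ : Measure Ω).map (fun ω => ⌊X ω + μ₁⌋) =
      (ℙ : Measure Ω).map (fun ω => ⌊X ω + μ₂⌋) := by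
    refine Measure.ext_of_singleton fun k => ?_
    rw [Measure.map_apply (hmeas μ₁) (measurableSet_singleton k),
      Measure.map_apply (hmeas μ₂) (measurableSet_singleton k)]
    exact hlaw k
  have hcdf (μ : ℝ) : F (-μ) = ((ℙ : Measure Ω).map (fun ω => ⌊X ω + μ⌋) (Set.Iio 0)).toReal := by
    rw [hF, Measure.map_apply (hmeas μ) measurableSet_Iio]
    congr 2
    ext ω
    simp only [Set.mem_ofPred_eq, Set.mem_preimage, Set.mem_Iio, Int.floor_lt, Int.cast_zero]
    exact lt_neg_iff_add_neg
  have hneg : F (-μ₁) = F (-μ₂) := by rw [hcdf, hcdf, hmap]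
  exact neg_injective (hFmono.injective hneg)
end

section
/- Let X be a real-valued random variable whose cumulative distribution function F(x) = P(X < x) is continuous and strictly increasing, and which satisfies: for every δ > 1 either lim_{x→∞} (1 − F(δx))/(1 − F(x)) = 0 or lim_{x→−∞} F(δx)/F(x) = 0. Let μ₁, μ₂ ∈ ℝ and σ₁, σ₂ > 0. If h(σ₁X + μ₁) and h(σ₂X + μ₂) have the same law, where h is the integer-part function, then σ₁ = σ₂ and μ₁ = μ₂. -/
/-!
The law of `⌊σ X + μ⌋` determines `P(⌊σ X + μ⌋ < k) = P(σ X + μ < k) = F ((k - μ) / σ)` for every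
integer `k`. Equality of the two laws and injectivity of `F` therefore give
`(k - μ₁) / σ₁ = (k - μ₂) / σ₂` for all `k`, and `k = 0, 1` already force `σ₁ = σ₂` and `μ₁ = μ₂`.
-/

open MeasureTheory ProbabilityTheory Filter

/-- **Identification of both scale and shift parameters from floor-quantized
observations.** If `X` has a continuous, strictly increasing cdf `F x = P(X < x)`
satisfying the tail condition (for every `δ > 1`, either
`(1 - F(δx))/(1 - F x) → 0` as `x → ∞` or `F(δx)/F(x) → 0` as `x → -∞`),
and the integer parts of `σ₁ X + μ₁` and `σ₂ X + μ₂` have the same law,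
then `σ₁ = σ₂` and `μ₁ = μ₂`. -/
theorem quantized_scale_shift_identification
    {Ω : Type*} [MeasureSpace Ω] [IsProbabilityMeasure (ℙ : Measure Ω)]
    (X : Ω → ℝ) (hX : Measurable X)
    (F : ℝ → ℝ) (hF : ∀ x, F x = (ℙ {ω | X ω < x}).toReal)
    (hFcont : Continuous F) (hFmono : StrictMono F)
    (htail : ∀ δ : ℝ, 1 < δ →
      Tendsto (fun x => (1 - F (δ * x)) / (1 - F x)) atTop (nhds 0) ∨
      Tendsto (fun x => F (δ * x) / F x) atBot (nhds 0))
    (μ₁ μ₂ : ℝ) (σ₁ σ₂ : ℝ) (hσ₁ : 0 < σ₁) (hσ₂ : 0 < σ₂)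
    (hlaw : ∀ k : ℤ, ℙ {ω | ⌊σ₁ * X ω + μ₁⌋ = k} = ℙ {ω | ⌊σ₂ * X ω + μ₂⌋ = k}) :
    σ₁ = σ₂ ∧ μ₁ = μ₂ := by
  have hmeas (σ μ : ℝ) : Measurable fun ω => ⌊σ * X ω + μ⌋ :=
    ((hX.const_mul σ).add_const μ).floor
  -- Measures on `ℤ` are determined by their values on singletons.
  have hmap : (ℙ : Measure Ω).map (fun ω => ⌊σ₁ * X ω + μ₁⌋) =
      (ℙ : Measure Ω).map (fun ω => ⌊σ₂ * X ω + μ₂⌋) := by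
    refine Measure.ext_of_singleton fun k => ?_
    rw [Measure.map_apply (hmeas _ _) (measurableSet_singleton k),
      Measure.map_apply (hmeas _ _) (measurableSet_singleton k)]
    exact hlaw k
  have hcdf (σ μ : ℝ) (hσ : 0 < σ) (k : ℤ) :
      F ((k - μ) / σ) =
        ((ℙ : Measure Ω).map (fun ω => ⌊σ * X ω + μ⌋) (Set.Iio k)).toReal := by
    rw [hF, Measure.map_apply (hmeas _ _) measurableSet_Iio]
    congr 2
    ext ω
    simp only [Set.mem_ofPred_eq, Set.mem_preimage, Set.mem_Iio, Int.floor_lt, lt_div_iff₀ hσ]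
    rw [mul_comm (X ω), lt_sub_iff_add_lt]
  have hk (k : ℤ) : ((k : ℝ) - μ₁) / σ₁ = (k - μ₂) / σ₂ :=
    hFmono.injective (by rw [hcdf _ _ hσ₁, hcdf _ _ hσ₂, hmap])
  have h0 := hk 0
  have h1 := hk 1
  rw [sub_div, sub_div, Int.cast_zero, zero_div, zero_div, zero_sub, zero_sub, neg_inj] at h0
  rw [sub_div, sub_div, h0, sub_left_inj, Int.cast_one, one_div, one_div, inv_inj] at h1
  subst h1
  exact ⟨rfl, (div_left_inj' hσ₁.ne').1 h0⟩
end

section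
/- Let X be a real-valued random variable whose cumulative distribution function F(x) = P(X < x) is continuous and strictly increasing, and which satisfies: for every δ > 1 either lim_{x→∞} (1 − F(δx))/(1 − F(x)) = 0 or lim_{x→−∞} F(δx)/F(x) = 0. Let μ₁, μ₂ ∈ ℝ and σ₁, σ₂ > 0. If q(σ₁X + μ₁) and q(σ₂X + μ₂) have the same law, where q is the rounding-off function q(x) = k for x ∈ [k − 1/2, k + 1/2), then σ₁ = σ₂ and μ₁ = μ₂. -/
/-!
Equality of the laws of the rounded variables gives equality of their distribution functions at
every integer `n`. Since `⌊σ x + μ + 1/2⌋ < n` means `x < (n - 1/2 - μ) / σ`, this reads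
`F ((n - 1/2 - μ₁) / σ₁) = F ((n - 1/2 - μ₂) / σ₂)`, and injectivity of `F` makes the two affine
functions of `n` agree at every integer. Their values at `n = 0` and `n = 1` already determine
`σ` and `μ`.
-/

open MeasureTheory ProbabilityTheory Filter

/-- **Identification of scale and shift parameters from rounded-off observations.**
Here the quantizer is the rounding function `q x = k` for `x ∈ [k - 1/2, k + 1/2)`,
i.e. `q x = ⌊x + 1/2⌋`. If `X` has a continuous, strictly increasing cdf
`F x = P(X < x)` satisfying the tail condition, and `q (σ₁ X + μ₁)` and
`q (σ₂ X + μ₂)` have the same law, then `σ₁ = σ₂` and `μ₁ = μ₂`. -/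
theorem rounded_scale_shift_identification
    {Ω : Type*} [MeasureSpace Ω] [IsProbabilityMeasure (ℙ : Measure Ω)]
    (X : Ω → ℝ) (hX : Measurable X)
    (F : ℝ → ℝ) (hF : ∀ x, F x = (ℙ {ω | X ω < x}).toReal)
    (hFcont : Continuous F) (hFmono : StrictMono F)
    (htail : ∀ δ : ℝ, 1 < δ →
      Tendsto (fun x => (1 - F (δ * x)) / (1 - F x)) atTop (nhds 0) ∨
      Tendsto (fun x => F (δ * x) / F x) atBot (nhds 0))
    (μ₁ μ₂ : ℝ) (σ₁ σ₂ : ℝ) (hσ₁ : 0 < σ₁) (hσ₂ : 0 < σ₂)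
    (hlaw : ∀ k : ℤ,
      ℙ {ω | ⌊σ₁ * X ω + μ₁ + 1/2⌋ = k} = ℙ {ω | ⌊σ₂ * X ω + μ₂ + 1/2⌋ = k}) :
    σ₁ = σ₂ ∧ μ₁ = μ₂ := by
  -- Two measures on the countable space `ℤ` that agree on singletons are equal.
  have hmeas (σ μ : ℝ) : Measurable fun ω => ⌊σ * X ω + μ + 1/2⌋ :=
    Int.measurable_floor.comp (((hX.const_mul σ).add_const μ).add_const (1/2))
  have hmap : Measure.map (fun ω => ⌊σ₁ * X ω + μ₁ + 1/2⌋) ℙ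
      = Measure.map (fun ω => ⌊σ₂ * X ω + μ₂ + 1/2⌋) ℙ := by
    refine Measure.ext_of_singleton fun k => ?_
    rw [Measure.map_apply (hmeas _ _) (measurableSet_singleton k),
      Measure.map_apply (hmeas _ _) (measurableSet_singleton k)]
    exact hlaw k
  have hcdf (σ μ : ℝ) (hσ : 0 < σ) (n : ℤ) :
      F ((n - 1/2 - μ) / σ)
        = (Measure.map (fun ω => ⌊σ * X ω + μ + 1/2⌋) ℙ (Set.Iio n)).toReal := by
    rw [Measure.map_apply (hmeas _ _) measurableSet_Iio, hF]
    congr 2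
    ext ω
    simp only [Set.mem_ofPred_eq, Set.mem_preimage, Set.mem_Iio, Int.floor_lt, lt_div_iff₀ hσ]
    constructor <;> intro h <;> linarith
  have key (n : ℤ) : ((n : ℝ) - 1/2 - μ₁) / σ₁ = (n - 1/2 - μ₂) / σ₂ :=
    hFmono.injective (by rw [hcdf σ₁ μ₁ hσ₁, hcdf σ₂ μ₂ hσ₂, hmap])
  have h0 := key 0
  have h1 := key 1
  rw [div_eq_div_iff hσ₁.ne' hσ₂.ne'] at h0 h1
  push_cast at h0 h1
  have hσ : σ₁ = σ₂ := by linarith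
  subst hσ
  refine ⟨rfl, ?_⟩
  have := mul_right_cancel₀ hσ₁.ne' h0
  linarith
end

section
/- Let θ = (α, μ, σ) and θ' = (α', μ', σ') with 0 ≤ α, α' < 1, μ, μ' ∈ ℝ, σ, σ' > 0. Let Z ~ N(μ/(1−α), σ²/(1−α²)) and ε ~ N(μ, σ²) be independent, and let Z' ~ N(μ'/(1−α'), σ'²/(1−α'²)) and ε' ~ N(μ', σ'²) be independent. If the ℤ²-valued random vectors (q(Z), q(αZ + ε)) and (q(Z'), q(α'Z' + ε')) have the same law, where q is the rounding-off function, then α = α', μ = μ' and σ = σ'. -/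
/-!
All half-lines with half-integer endpoints are seen by the quantizer, so the hypothesis gives
`ℙ(Z < j - 1/2) = ℙ(Z' < j - 1/2)` for every integer `j`. With `Φ` the standard normal
distribution function, strict monotonicity of `Φ` (`stdPhi_strictMono`) turns this into the
equality of two affine functions of `j`, hence `Z` and `Z'` have the same mean and variance
(`affine_param_eq`). Write `ν` for this common law.

By independence, for every Borel set `A` (`pair_measure_eq`),
`ℙ(Z ∈ A, αZ + ε < k) = ∫_A Φ((k - αz - μ)/σ) dν(z)`.
The common variance equals `σ² / (1 - α²)`, so if `α < α'` then `σ' < σ` and the slopes satisfy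
`α/σ < α'/σ'`. The two affine arguments of `Φ` therefore cross exactly once, at some `x₀`, and the
primed integrand is strictly larger than the unprimed one to the left of `x₀` and strictly smaller
to its right. Quantization identifies the integrals over both `A = (-∞, -1/2)` and
`A = [-1/2, ∞)`. One of these half-lines lies on one side of `x₀`, where the integrands are strictly
ordered, a contradiction (`no_single_crossing`). Hence `α = α'`, and the equality of mean and
variance gives the rest.
-/

open MeasureTheory ProbabilityTheory Filter

/-- The standard normal distribution function, with values in `[0, ∞]` and with an open half-line:
`Φ(t) = N(0,1)((-∞, t))`. -/
noncomputable def stdPhi (t : ℝ) : ENNReal := gaussianReal 0 1 (Set.Iio t)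

lemma gaussianReal_ne_zero_of_nonempty_interior (m : ℝ) {v : NNReal} (hv : v ≠ 0) {s : Set ℝ}
    (hs : (interior s).Nonempty) : gaussianReal m v s ≠ 0 := fun h =>
  (Measure.measure_pos_of_nonempty_interior volume hs).ne' (gaussianReal_absolutelyContinuous' m hv h)

lemma stdPhi_strictMono : StrictMono stdPhi := by
  intro a b hab
  have h1 : stdPhi b = stdPhi a + gaussianReal 0 1 (Set.Ico a b) := by
    unfold stdPhi
    rw [← measure_union _ measurableSet_Ico, Set.Iio_union_Ico_eq_Iio hab.le]
    exact Set.disjoint_left.2 fun x hx hx' => absurd hx'.1 (not_le.2 hx)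
  rw [h1]
  refine ENNReal.lt_add_right (measure_ne_top _ _)
    (gaussianReal_ne_zero_of_nonempty_interior 0 one_ne_zero ?_)
  rw [interior_Ico]
  exact Set.nonempty_Ioo.2 hab

lemma gaussianReal_Iio (m : ℝ) {s : ℝ} (hs : 0 < s) (t : ℝ) :
    gaussianReal m (Real.toNNReal (s ^ 2)) (Set.Iio t) = stdPhi ((t - m) / s) := by
  have h : gaussianReal m (Real.toNNReal (s ^ 2))
      = ((gaussianReal 0 1).map (s * ·)).map (· + m) := by
    rw [gaussianReal_map_const_mul, gaussianReal_map_add_const]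
    congr 1
    · simp
    · ext
      simp [sq_nonneg]
  rw [h, Measure.map_map (by fun_prop) (by fun_prop),
    Measure.map_apply (by fun_prop) measurableSet_Iio, stdPhi]
  congr 1
  ext x
  simp only [Set.mem_preimage, Function.comp_apply, Set.mem_Iio]
  rw [lt_div_iff₀ hs, lt_sub_iff_add_lt, mul_comm]

lemma affine_param_eq {m s m' s' : ℝ} (hs : 0 < s) (hs' : 0 < s')
    (h : ∀ j : ℤ, ((j - 1 / 2 : ℝ) - m) / s = ((j - 1 / 2 : ℝ) - m') / s') :
    m = m' ∧ s = s' := by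
  have h0 := h 0
  have h1 := h 1
  rw [div_eq_div_iff hs.ne' hs'.ne'] at h0 h1
  push_cast at h0 h1
  have e : s = s' := by linarith
  subst e
  exact ⟨by linarith [mul_right_cancel₀ hs.ne' h0], rfl⟩

/-- Conditioning on `Z`: the joint law of `Z` and `αZ + ε` as an integral over the law of `Z`. -/
lemma pair_measure_eq {Ω : Type*} [MeasureSpace Ω] [IsProbabilityMeasure (ℙ : Measure Ω)]
    {α μ σ : ℝ} (hσ : 0 < σ) {Z ε : Ω → ℝ} (hZm : Measurable Z) (hεm : Measurable ε)
    (hεlaw : Measure.map ε ℙ = gaussianReal μ (Real.toNNReal (σ ^ 2)))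
    (hindep : IndepFun Z ε ℙ) {A : Set ℝ} (hA : MeasurableSet A) (k : ℝ) :
    ℙ {ω | Z ω ∈ A ∧ α * Z ω + ε ω < k}
      = ∫⁻ z in A, stdPhi ((k - α * z - μ) / σ) ∂(Measure.map Z ℙ) := by
  have hprod := (indepFun_iff_map_prod_eq_prod_map_map hZm.aemeasurable hεm.aemeasurable).1 hindep
  have hS : MeasurableSet {p : ℝ × ℝ | p.1 ∈ A ∧ α * p.1 + p.2 < k} :=
    (measurable_fst hA).inter (measurableSet_lt (f := fun p : ℝ × ℝ => α * p.1 + p.2)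
      (g := fun _ => k) (by fun_prop) (by fun_prop))
  have hmap : ℙ {ω | Z ω ∈ A ∧ α * Z ω + ε ω < k}
      = Measure.map (fun ω => (Z ω, ε ω)) ℙ {p : ℝ × ℝ | p.1 ∈ A ∧ α * p.1 + p.2 < k} :=
    (Measure.map_apply (hZm.prodMk hεm) hS).symm
  have : IsProbabilityMeasure (Measure.map ε ℙ) :=
    Measure.isProbabilityMeasure_map hεm.aemeasurable
  rw [hmap, hprod, Measure.prod_apply hS, hεlaw, ← lintegral_indicator hA]
  refine lintegral_congr fun z => ?_
  by_cases hz : z ∈ A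
  · rw [Set.indicator_of_mem hz, ← gaussianReal_Iio μ hσ]
    congr 1
    ext y
    simp only [Set.mem_preimage, Set.mem_ofPred_eq, Set.mem_Iio, hz, true_and]
    constructor <;> intro h <;> linarith
  · rw [Set.indicator_of_notMem hz]
    convert measure_empty (μ := gaussianReal μ (Real.toNNReal (σ ^ 2)))
    ext y
    simp [hz]

lemma measurable_stdPhi_affine (k α μ σ : ℝ) :
    Measurable fun z : ℝ => stdPhi ((k - α * z - μ) / σ) :=
  stdPhi_strictMono.monotone.measurable.comp (by fun_prop)

/-- Two normal distribution functions of affine arguments with different slopes cross exactly once,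
so their integrals cannot agree on both of two complementary half-lines. -/
lemma no_single_crossing {ν : Measure ℝ} [IsProbabilityMeasure ν] {α μ σ α' μ' σ' h k : ℝ}
    (hslope : α / σ < α' / σ') (hl : ν (Set.Iio h) ≠ 0) (hr : ν (Set.Ici h) ≠ 0)
    (el : ∫⁻ z in Set.Iio h, stdPhi ((k - α * z - μ) / σ) ∂ν
      = ∫⁻ z in Set.Iio h, stdPhi ((k - α' * z - μ') / σ') ∂ν)
    (er : ∫⁻ z in Set.Ici h, stdPhi ((k - α * z - μ) / σ) ∂ν
      = ∫⁻ z in Set.Ici h, stdPhi ((k - α' * z - μ') / σ') ∂ν) : False := by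
  have hfin : ∀ (A : Set ℝ) (a m s : ℝ), ∫⁻ z in A, stdPhi ((k - a * z - m) / s) ∂ν ≠ ⊤ := by
    intro A a m s
    refine ((lintegral_mono fun z => (prob_le_one : stdPhi _ ≤ 1)).trans_lt ?_).ne
    simp
  set d := α' / σ' - α / σ with hd
  have hdpos : 0 < d := sub_pos.2 hslope
  obtain ⟨x₀, hx₀⟩ : ∃ x₀, x₀ * d = (k - μ') / σ' - (k - μ) / σ :=
    ⟨_, div_mul_cancel₀ _ hdpos.ne'⟩
  have key : ∀ z, (k - α' * z - μ') / σ' - (k - α * z - μ) / σ = (x₀ - z) * d := by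
    intro z
    rw [sub_mul, hx₀, hd]
    ring
  rcases le_or_gt h x₀ with hx | hx
  · refine (setLIntegral_strict_mono measurableSet_Iio hl (measurable_stdPhi_affine k α' μ' σ')
      (hfin _ _ _ _) (ae_of_all _ fun z hz => stdPhi_strictMono ?_)).ne el
    have hz' : z < h := hz
    have := key z
    have : 0 < (x₀ - z) * d := mul_pos (by linarith) hdpos
    linarith
  · refine (setLIntegral_strict_mono measurableSet_Ici hr (measurable_stdPhi_affine k α μ σ)
      (hfin _ _ _ _) (ae_of_all _ fun z hz => stdPhi_strictMono ?_)).ne er.symm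
    have hz' : h ≤ z := hz
    have := key z
    have : (x₀ - z) * d < 0 := mul_neg_of_neg_of_pos (by linarith) hdpos
    linarith

/-- With a common stationary variance, `α/σ` is a strictly increasing function of `α ∈ [0, 1)`. -/
lemma slope_lt {α σ α' σ' : ℝ} (hα0 : 0 ≤ α) (hα'1 : α' < 1) (hσ : 0 < σ) (hσ' : 0 < σ')
    (hv : σ ^ 2 / (1 - α ^ 2) = σ' ^ 2 / (1 - α' ^ 2)) (hlt : α < α') :
    α / σ < α' / σ' := by
  have p : 0 < 1 - α ^ 2 := by nlinarith
  have p' : 0 < 1 - α' ^ 2 := by nlinarith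
  rw [div_eq_div_iff p.ne' p'.ne'] at hv
  have hs : σ' < σ := by
    by_contra! hle
    have h1 : σ ^ 2 ≤ σ' ^ 2 := by gcongr
    have h2 : 1 - α' ^ 2 < 1 - α ^ 2 := by nlinarith
    have h3 : 0 < σ ^ 2 := by positivity
    nlinarith
  rw [div_lt_div_iff₀ hσ hσ']
  nlinarith

lemma measure_preimage_eq_of_singleton {Ω : Type*} [MeasurableSpace Ω] {P : Measure Ω}
    {N N' : Ω → ℤ × ℤ} (hN : Measurable N) (hN' : Measurable N')
    (h : ∀ a, P (N ⁻¹' {a}) = P (N' ⁻¹' {a})) (A : Set (ℤ × ℤ)) :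
    P (N ⁻¹' A) = P (N' ⁻¹' A) := by
  have e : P.map N = P.map N' := Measure.ext_of_singleton fun a => by
    rw [Measure.map_apply hN (.singleton a), Measure.map_apply hN' (.singleton a), h]
  rw [← Measure.map_apply hN .of_discrete, ← Measure.map_apply hN' .of_discrete, e]

lemma floor_add_half_lt_iff (x : ℝ) (j : ℤ) : ⌊x + 1 / 2⌋ < j ↔ x < j - 1 / 2 := by
  rw [Int.floor_lt, lt_sub_iff_add_lt]

lemma le_floor_add_half_iff (x : ℝ) (j : ℤ) : j ≤ ⌊x + 1 / 2⌋ ↔ j - 1 / 2 ≤ x := by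
  rw [Int.le_floor, sub_le_iff_le_add]

/-- **Identification of AR(1) parameters from the quantized stationary pair law.**
Let `θ = (α, μ, σ)` and `θ' = (α', μ', σ')` with `0 ≤ α, α' < 1` and `σ, σ' > 0`.
Let `Z ~ N(μ/(1-α), σ²/(1-α²))` and `ε ~ N(μ, σ²)` be independent, and similarly
for the primed quantities. If the `ℤ²`-valued vectors `(q Z, q (α Z + ε))` and
`(q Z', q (α' Z' + ε'))` have the same law, where `q x = ⌊x + 1/2⌋` is the
rounding quantizer, then `α = α'`, `μ = μ'` and `σ = σ'`. -/
theorem quantized_stationary_pair_identification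
    {Ω : Type*} [MeasureSpace Ω] [IsProbabilityMeasure (ℙ : Measure Ω)]
    (α μ σ α' μ' σ' : ℝ)
    (hα0 : 0 ≤ α) (hα1 : α < 1) (hα'0 : 0 ≤ α') (hα'1 : α' < 1)
    (hσ : 0 < σ) (hσ' : 0 < σ')
    (Z ε Z' ε' : Ω → ℝ)
    (hZm : Measurable Z) (hεm : Measurable ε)
    (hZ'm : Measurable Z') (hε'm : Measurable ε')
    (hZlaw : Measure.map Z ℙ =
      gaussianReal (μ / (1 - α)) (Real.toNNReal (σ ^ 2 / (1 - α ^ 2))))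
    (hεlaw : Measure.map ε ℙ = gaussianReal μ (Real.toNNReal (σ ^ 2)))
    (hZ'law : Measure.map Z' ℙ =
      gaussianReal (μ' / (1 - α')) (Real.toNNReal (σ' ^ 2 / (1 - α' ^ 2))))
    (hε'law : Measure.map ε' ℙ = gaussianReal μ' (Real.toNNReal (σ' ^ 2)))
    (hindep : IndepFun Z ε ℙ) (hindep' : IndepFun Z' ε' ℙ)
    (hlaw : ∀ j k : ℤ,
      ℙ {ω | ⌊Z ω + 1/2⌋ = j ∧ ⌊α * Z ω + ε ω + 1/2⌋ = k} =
      ℙ {ω | ⌊Z' ω + 1/2⌋ = j ∧ ⌊α' * Z' ω + ε' ω + 1/2⌋ = k}) :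
    α = α' ∧ μ = μ' ∧ σ = σ' := by
  -- The quantized pairs give equal probability to every subset of `ℤ²`.
  have hN : Measurable fun ω => (⌊Z ω + 1 / 2⌋, ⌊α * Z ω + ε ω + 1 / 2⌋) := by fun_prop
  have hN' : Measurable fun ω => (⌊Z' ω + 1 / 2⌋, ⌊α' * Z' ω + ε' ω + 1 / 2⌋) := by fun_prop
  have hset := measure_preimage_eq_of_singleton (P := (ℙ : Measure Ω)) hN hN' (by
    rintro ⟨j, k⟩
    simpa only [Set.preimage, Set.mem_singleton_iff, Prod.mk.injEq] using hlaw j k)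
  have p : 0 < 1 - α ^ 2 := by nlinarith
  have p' : 0 < 1 - α' ^ 2 := by nlinarith
  have hv : 0 < σ ^ 2 / (1 - α ^ 2) := by positivity
  have hv' : 0 < σ' ^ 2 / (1 - α' ^ 2) := by positivity
  have hmarg : ∀ j : ℤ, ((j - 1 / 2 : ℝ) - μ / (1 - α)) / √(σ ^ 2 / (1 - α ^ 2))
      = ((j - 1 / 2 : ℝ) - μ' / (1 - α')) / √(σ' ^ 2 / (1 - α' ^ 2)) := by
    intro j
    apply stdPhi_strictMono.injective
    rw [← gaussianReal_Iio _ (Real.sqrt_pos.2 hv), ← gaussianReal_Iio _ (Real.sqrt_pos.2 hv'),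
      Real.sq_sqrt hv.le, Real.sq_sqrt hv'.le, ← hZlaw, ← hZ'law,
      Measure.map_apply hZm measurableSet_Iio, Measure.map_apply hZ'm measurableSet_Iio]
    simpa only [Set.preimage, Set.mem_ofPred_eq, floor_add_half_lt_iff, Set.mem_Iio]
      using hset {a | a.1 < j}
  obtain ⟨hmean, hsd⟩ := affine_param_eq (Real.sqrt_pos.2 hv) (Real.sqrt_pos.2 hv') hmarg
  have hvar : σ ^ 2 / (1 - α ^ 2) = σ' ^ 2 / (1 - α' ^ 2) := by
    rw [← Real.sq_sqrt hv.le, ← Real.sq_sqrt hv'.le, hsd]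
  have hZZ' : Measure.map Z' ℙ = Measure.map Z ℙ := by rw [hZlaw, hZ'law, hmean, hvar]
  have hprob : IsProbabilityMeasure (Measure.map Z ℙ) :=
    Measure.isProbabilityMeasure_map hZm.aemeasurable
  have hl : Measure.map Z ℙ (Set.Iio ((0 : ℤ) - 1 / 2)) ≠ 0 := by
    rw [hZlaw]
    exact gaussianReal_ne_zero_of_nonempty_interior _ (Real.toNNReal_pos.2 hv).ne'
      (by rw [interior_Iio]; exact Set.nonempty_Iio)
  have hr : Measure.map Z ℙ (Set.Ici ((0 : ℤ) - 1 / 2)) ≠ 0 := by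
    rw [hZlaw]
    exact gaussianReal_ne_zero_of_nonempty_interior _ (Real.toNNReal_pos.2 hv).ne'
      (by rw [interior_Ici]; exact Set.nonempty_Ioi)
  have el : ∫⁻ z in Set.Iio ((0 : ℤ) - 1 / 2 : ℝ),
        stdPhi ((((0 : ℤ) - 1 / 2 : ℝ) - α * z - μ) / σ) ∂(Measure.map Z ℙ)
      = ∫⁻ z in Set.Iio ((0 : ℤ) - 1 / 2 : ℝ),
        stdPhi ((((0 : ℤ) - 1 / 2 : ℝ) - α' * z - μ') / σ') ∂(Measure.map Z ℙ) := by
    rw [← pair_measure_eq hσ hZm hεm hεlaw hindep measurableSet_Iio, ← hZZ',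
      ← pair_measure_eq hσ' hZ'm hε'm hε'law hindep' measurableSet_Iio]
    simpa only [Set.preimage, Set.mem_ofPred_eq, floor_add_half_lt_iff, Set.mem_Iio]
      using hset {a | a.1 < 0 ∧ a.2 < 0}
  have er : ∫⁻ z in Set.Ici ((0 : ℤ) - 1 / 2 : ℝ),
        stdPhi ((((0 : ℤ) - 1 / 2 : ℝ) - α * z - μ) / σ) ∂(Measure.map Z ℙ)
      = ∫⁻ z in Set.Ici ((0 : ℤ) - 1 / 2 : ℝ),
        stdPhi ((((0 : ℤ) - 1 / 2 : ℝ) - α' * z - μ') / σ') ∂(Measure.map Z ℙ) := by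
    rw [← pair_measure_eq hσ hZm hεm hεlaw hindep measurableSet_Ici, ← hZZ',
      ← pair_measure_eq hσ' hZ'm hε'm hε'law hindep' measurableSet_Ici]
    simpa only [Set.preimage, Set.mem_ofPred_eq, floor_add_half_lt_iff, le_floor_add_half_iff,
      Set.mem_Ici] using hset {a | 0 ≤ a.1 ∧ a.2 < 0}
  have hαα' : α = α' := by
    rcases lt_trichotomy α α' with hlt | heq | hgt
    · exact (no_single_crossing (slope_lt hα0 hα'1 hσ hσ' hvar hlt) hl hr el er).elim
    · exact heq
    · exact (no_single_crossing (slope_lt hα'0 hα1 hσ' hσ hvar.symm hgt) hl hr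
        el.symm er.symm).elim
  subst hαα'
  refine ⟨rfl, ?_, ?_⟩
  · exact (div_left_inj' (sub_pos.2 hα1).ne').1 hmean
  · exact (pow_left_inj₀ hσ.le hσ'.le two_ne_zero).1 ((div_left_inj' p.ne').1 hvar)
end

section
/- Let M and M' be Gaussian random variables with parameters (m, s²) and (m', s'²) respectively, where s, s' > 0. If (m, s²) ≠ (m', s'²), then the laws of q(M) and q(M') differ; that is, there exists k ∈ ℤ with P(M ∈ [k − 1/2, k + 1/2)) ≠ P(M' ∈ [k − 1/2, k + 1/2)). -/
/-!
If two Gaussian laws give the same mass to a cell `[k - 1/2, k + 1/2)`, the difference of their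
densities integrates to zero over it, so by Rolle's theorem applied to its primitive the
densities agree at some interior point (`exists_gaussianPDFReal_eq`). The logarithm of each
density is a polynomial of degree two, so agreement in three disjoint cells makes the two
polynomials coincide; comparing coefficients (`quadratic_unique`) gives equal means and variances.
Hence the masses of the three cells `k = 0, 1, 2` already determine the parameters.
-/

open MeasureTheory ProbabilityTheory Filter

lemma continuous_gaussianPDFReal_aux (m : ℝ) (v : NNReal) :
    Continuous (gaussianPDFReal m v) := by
  rw [gaussianPDFReal_def]
  fun_prop

lemma exists_gaussianPDFReal_eq {m m' : ℝ} {v v' : NNReal} (hv : v ≠ 0) (hv' : v' ≠ 0)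
    {a b : ℝ} (hab : a < b)
    (h : gaussianReal m v (Set.Ico a b) = gaussianReal m' v' (Set.Ico a b)) :
    ∃ x ∈ Set.Ioo a b, gaussianPDFReal m v x = gaussianPDFReal m' v' x := by
  have hf := continuous_gaussianPDFReal_aux m v
  have hg := continuous_gaussianPDFReal_aux m' v'
  rw [gaussianReal_apply_eq_integral m hv, gaussianReal_apply_eq_integral m' hv',
    ENNReal.ofReal_eq_ofReal_iff
      (integral_nonneg fun x => gaussianPDFReal_nonneg m v x)
      (integral_nonneg fun x => gaussianPDFReal_nonneg m' v' x),
    integral_Ico_eq_integral_Ioc, integral_Ico_eq_integral_Ioc,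
    ← intervalIntegral.integral_of_le hab.le, ← intervalIntegral.integral_of_le hab.le] at h
  have hd : ∀ x, HasDerivAt
      (fun u => (∫ y in a..u, gaussianPDFReal m v y) - ∫ y in a..u, gaussianPDFReal m' v' y)
      (gaussianPDFReal m v x - gaussianPDFReal m' v' x) x := fun x =>
    (hf.integral_hasStrictDerivAt a x).hasDerivAt.sub
      (hg.integral_hasStrictDerivAt a x).hasDerivAt
  obtain ⟨c, hc, hc0⟩ := exists_hasDerivAt_eq_zero hab
    (fun x _ => (hd x).continuousAt.continuousWithinAt) (by simp [h]) (fun x _ => hd x)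
  exact ⟨c, hc, sub_eq_zero.mp hc0⟩

lemma log_gaussianPDFReal {m : ℝ} {v : NNReal} (hv : v ≠ 0) (x : ℝ) :
    Real.log (gaussianPDFReal m v x) =
      Real.log (√(2 * Real.pi * v))⁻¹ - (2 * (v : ℝ))⁻¹ * (x - m) ^ 2 := by
  have : 0 < (v : ℝ) := by positivity
  rw [gaussianPDFReal, Real.log_mul (by positivity) (Real.exp_ne_zero _), Real.log_exp]
  ring

/-- The values of `A - a (x - m)²`, `a ≠ 0`, at three distinct points determine `m` and `a`;
the constants `A`, `B` cancel in differences of consecutive values. -/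
lemma quadratic_unique {A B a b m m' x y z : ℝ} (ha : a ≠ 0) (hxy : x < y) (hyz : y < z)
    (hx : A - a * (x - m) ^ 2 = B - b * (x - m') ^ 2)
    (hy : A - a * (y - m) ^ 2 = B - b * (y - m') ^ 2)
    (hz : A - a * (z - m) ^ 2 = B - b * (z - m') ^ 2) : m = m' ∧ a = b := by
  have h1 : a * (x + y - 2 * m) = b * (x + y - 2 * m') :=
    mul_left_cancel₀ (sub_ne_zero.mpr hxy.ne) (by linear_combination hy - hx)
  have h2 : a * (y + z - 2 * m) = b * (y + z - 2 * m') :=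
    mul_left_cancel₀ (sub_ne_zero.mpr hyz.ne) (by linear_combination hz - hy)
  have h3 : a = b :=
    mul_right_cancel₀ (sub_ne_zero.mpr (hxy.trans hyz).ne) (by linear_combination h1 - h2)
  subst h3
  exact ⟨by linarith [mul_left_cancel₀ ha h1], rfl⟩

/-- **Distinct Gaussian laws remain distinct after rounding.** If `M ~ N(m, s²)`
and `M' ~ N(m', s'²)` with `s, s' > 0` and `(m, s²) ≠ (m', s'²)`, then the laws
of `q M` and `q M'` differ: there is an integer `k` with
`P(M ∈ [k - 1/2, k + 1/2)) ≠ P(M' ∈ [k - 1/2, k + 1/2))`. -/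
theorem quantized_gaussians_distinct
    {Ω : Type*} [MeasureSpace Ω] [IsProbabilityMeasure (ℙ : Measure Ω)]
    (m s m' s' : ℝ) (hs : 0 < s) (hs' : 0 < s')
    (M M' : Ω → ℝ) (hM : Measurable M) (hM' : Measurable M')
    (hMlaw : Measure.map M ℙ = gaussianReal m (Real.toNNReal (s ^ 2)))
    (hM'law : Measure.map M' ℙ = gaussianReal m' (Real.toNNReal (s' ^ 2)))
    (hne : ¬(m = m' ∧ s ^ 2 = s' ^ 2)) :
    ∃ k : ℤ, ℙ {ω | M ω ∈ Set.Ico ((k : ℝ) - 1/2) ((k : ℝ) + 1/2)} ≠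
             ℙ {ω | M' ω ∈ Set.Ico ((k : ℝ) - 1/2) ((k : ℝ) + 1/2)} := by
  by_contra! hk
  set v := Real.toNNReal (s ^ 2) with hvdef
  set v' := Real.toNNReal (s' ^ 2) with hvdef'
  have hv : v ≠ 0 := (Real.toNNReal_pos.mpr (by positivity)).ne'
  have hv' : v' ≠ 0 := (Real.toNNReal_pos.mpr (by positivity)).ne'
  have key : ∀ k : ℤ, ∃ x ∈ Set.Ioo ((k : ℝ) - 1/2) ((k : ℝ) + 1/2),
      Real.log (√(2 * Real.pi * v))⁻¹ - (2 * (v : ℝ))⁻¹ * (x - m) ^ 2 =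
      Real.log (√(2 * Real.pi * v'))⁻¹ - (2 * (v' : ℝ))⁻¹ * (x - m') ^ 2 := by
    intro k
    obtain ⟨x, hx, hxe⟩ := exists_gaussianPDFReal_eq (m := m) (m' := m') hv hv'
      (a := (k : ℝ) - 1/2) (b := (k : ℝ) + 1/2) (by linarith) (by
        rw [← hMlaw, ← hM'law, Measure.map_apply hM measurableSet_Ico,
          Measure.map_apply hM' measurableSet_Ico]
        exact hk k)
    exact ⟨x, hx, by rw [← log_gaussianPDFReal hv, ← log_gaussianPDFReal hv', hxe]⟩
  obtain ⟨x, hx, ex⟩ := key 0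
  obtain ⟨y, hy, ey⟩ := key 1
  obtain ⟨z, hz, ez⟩ := key 2
  simp only [Set.mem_Ioo] at hx hy hz
  push_cast at hx hy hz
  have hv0 : (v : ℝ) ≠ 0 := by exact_mod_cast hv
  obtain ⟨hm, hvv⟩ := quadratic_unique (by positivity)
    (by linarith : x < y) (by linarith : y < z) ex ey ez
  have hvv' : (v : ℝ) = v' := mul_left_cancel₀ two_ne_zero (inv_injective hvv)
  rw [hvdef, hvdef', Real.coe_toNNReal _ (sq_nonneg s), Real.coe_toNNReal _ (sq_nonneg s')] at hvv'
  exact hne ⟨hm, hvv'⟩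
end
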